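/- Let T be a triangulated category and let (U, V) be a co-t-structure on the smallest thick triangulated subcategory Thick(U) of T containing U. Then (U, U ∩ V) is a left Frobenius pair in T, and the hull (U ∩ V)^ equals V. -/

import Mathlib

/-!
Let `(U, V)` be a co-t-structure on a thick subcategory `B`. Each half is an orthogonal of the other
inside `B`: if `M` in `B` is orthogonal to the relevant half, then the connecting morphism of its
approximation triangle vanishes, so `M` is a retract of the middle term. Orthogonals are closed
under extensions, hence so are `U` and `V`. Since `U` is stable under `[-1]` and `V` under `[1]`,
rotating triangles makes `U` closed under cocones and `V` closed under cones. The Frobenius axioms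
and the inclusion of the hull of `U ∩ V` in `V ∩ Thick(U)` follow.

Conversely, the increasing union of the `U[n]` is thick, so every object of `Thick(U)` lies in some
`U[n]`. For `M ∈ V ∩ U[n+1]`, the triangle `V₀ → U₀ → M → V₀[1]` has `U₀ ∈ V` because `V` is closed
under extensions, and `V₀ ∈ U[n]`, being an extension of `U₀` by `M[-1]`. Iterating, `M` acquires a
resolution by `U ∩ V` of length `n + 1`.
-/

open CategoryTheory CategoryTheory.Limits CategoryTheory.Pretriangulated ZeroObject

universe v u

namespace FrobeniusPaperTri

variable {T : Type u} [Category.{v} T] [HasZeroObject T] [HasShift T ℤ] [Preadditive T]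
  [∀ n : ℤ, (shiftFunctor T n).Additive] [Pretriangulated T]

/-- A "subcategory" of the triangulated category `T`: a full additive subcategory, regarded
as the membership predicate on objects, closed under isomorphisms and direct summands. -/
structure IsTriSubcat (X : T → Prop) : Prop where
  zero : X 0
  iso_closed : ∀ {A B : T}, (A ≅ B) → X A → X B
  summand_closed : ∀ {A M : T} (i : A ⟶ M) (p : M ⟶ A), i ≫ p = 𝟙 A → X M → X A

/-- `TriHat X n M` : `M ∈ X̂ₙ`, i.e. there are distinguished triangles
`K_{i+1} → X_i → K_i → K_{i+1}[1]` for `0 ≤ i ≤ n-1` with `K₀ = M`, all `X_i ∈ X` and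
`K_n ∈ X`. -/
def TriHat (X : T → Prop) : ℕ → T → Prop
  | 0, M => X M
  | (n + 1), M => ∃ (K E : T) (f : K ⟶ E) (g : E ⟶ M) (h : M ⟶ K⟦(1 : ℤ)⟧),
      (Triangle.mk f g h ∈ distTriang T) ∧ X E ∧ TriHat X n K

/-- `M ∈ X̂ = ⋃ₙ X̂ₙ`. -/
def TriHatAll (X : T → Prop) (M : T) : Prop := ∃ n, TriHat X n M

/-- A left Frobenius pair `(X, W)` in the triangulated category `T`. -/
structure TriLeftFrobenius (X W : T → Prop) : Prop where
  subX : IsTriSubcat X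
  subW : IsTriSubcat W
  /-- `X` is closed under extensions. -/
  extClosed : ∀ ⦃A B M : T⦄ (f : A ⟶ B) (g : B ⟶ M) (h : M ⟶ A⟦(1 : ℤ)⟧),
    (Triangle.mk f g h ∈ distTriang T) →
    X A → X M → X B
  /-- `X` is closed under cocones of deflations. -/
  coconeClosed : ∀ ⦃A B M : T⦄ (f : A ⟶ B) (g : B ⟶ M) (h : M ⟶ A⟦(1 : ℤ)⟧),
    (Triangle.mk f g h ∈ distTriang T) →
    X B → X M → X A
  /-- `W ⊆ X`. -/
  WsubX : ∀ M, W M → X M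
  /-- `W` is a cogenerator for `X`: every `M ∈ X` fits in a distinguished triangle
  `M → W₀ → X' → M[1]` with `W₀ ∈ W`, `X' ∈ X`. -/
  cogen : ∀ M, X M → ∃ (W₀ X' : T) (f : M ⟶ W₀) (g : W₀ ⟶ X') (h : X' ⟶ M⟦(1 : ℤ)⟧),
    (Triangle.mk f g h ∈ distTriang T) ∧ W W₀ ∧ X X'
  /-- `W ⊆ X^⊥`: `Hom(M, N[i]) = 0` for `i ≥ 1`, `M ∈ X`, `N ∈ W`. -/
  perp : ∀ M N, X M → W N → ∀ i : ℤ, 1 ≤ i → ∀ f : M ⟶ N⟦i⟧, f = 0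

/-- A thick (strictly full) triangulated subcategory of `T`, closed under direct summands. -/
structure IsThickTriSub (S : T → Prop) : Prop where
  zero : S 0
  iso_closed : ∀ {A B : T}, (A ≅ B) → S A → S B
  shift_closed : ∀ (M : T) (n : ℤ), S M → S (M⟦n⟧)
  ext_closed : ∀ ⦃A B M : T⦄ (f : A ⟶ B) (g : B ⟶ M) (h : M ⟶ A⟦(1 : ℤ)⟧),
    (Triangle.mk f g h ∈ distTriang T) →
    S A → S B → S M
  summand_closed : ∀ {A M : T} (i : A ⟶ M) (p : M ⟶ A), i ≫ p = 𝟙 A → S M → S A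

/-- Membership in `Thick(X)`, the smallest thick triangulated subcategory containing `X`. -/
def triThickClosure (X : T → Prop) (M : T) : Prop :=
  ∀ S : T → Prop, IsThickTriSub S → (∀ N, X N → S N) → S M

/-- A co-t-structure `(U, V)` on a (thick triangulated) subcategory `B` of `T`, where
subcategories are given by their membership predicates. -/
structure CoTStructureOn (B U V : T → Prop) : Prop where
  UsubB : ∀ M, U M → B M
  VsubB : ∀ M, V M → B M
  isoU : ∀ {A B' : T}, (A ≅ B') → U A → U B'
  summandU : ∀ {A M : T} (i : A ⟶ M) (p : M ⟶ A), i ≫ p = 𝟙 A → U M → U A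
  isoV : ∀ {A B' : T}, (A ≅ B') → V A → V B'
  summandV : ∀ {A M : T} (i : A ⟶ M) (p : M ⟶ A), i ≫ p = 𝟙 A → V M → V A
  /-- `U[-1] ⊆ U`. -/
  shiftU : ∀ M : T, U M → U (M⟦(-1 : ℤ)⟧)
  /-- `Hom(U, V[1]) = 0`. -/
  hom_zero : ∀ (M N : T) (f : M ⟶ N⟦(1 : ℤ)⟧), U M → V N → f = 0
  /-- Every `C ∈ B` admits a distinguished triangle `V₀ → U₀ → C → V₀[1]`. -/
  tri₁ : ∀ M : T, B M → ∃ (V₀ U₀ : T) (f : V₀ ⟶ U₀) (g : U₀ ⟶ M) (h : M ⟶ V₀⟦(1 : ℤ)⟧),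
    (Triangle.mk f g h ∈ distTriang T) ∧ U U₀ ∧ V V₀
  /-- Every `C ∈ B` admits a distinguished triangle `C → V₀ → U₀ → C[1]`. -/
  tri₂ : ∀ M : T, B M → ∃ (V₀ U₀ : T) (f : M ⟶ V₀) (g : V₀ ⟶ U₀) (h : U₀ ⟶ M⟦(1 : ℤ)⟧),
    (Triangle.mk f g h ∈ distTriang T) ∧ U U₀ ∧ V V₀

section ShiftOfProperty

variable {C : Type*} [Category* C] [HasShift C ℤ] (P : ObjectProperty C)

instance isStableUnderRetracts_shift [P.IsStableUnderRetracts] (n : ℤ) :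
    (P.shift n).IsStableUnderRetracts where
  of_retract r hY := P.prop_of_retract (r.map (shiftFunctor C n)) hY

lemma antitone_shift [P.IsClosedUnderIsomorphisms] [P.IsStableUnderShiftBy (-1 : ℤ)] :
    Antitone (P.shift : ℤ → ObjectProperty C) := by
  refine antitone_int_of_succ_le fun n ↦ ?_
  rw [← P.shift_shift (n + 1) (-1) n (by lia)]
  exact fun X hX ↦ P.le_shift (-1) _ hX

lemma monotone_shift [P.IsClosedUnderIsomorphisms] [P.IsStableUnderShiftBy (1 : ℤ)] :
    Monotone (P.shift : ℤ → ObjectProperty C) := by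
  refine monotone_int_of_le_succ fun n ↦ ?_
  rw [← P.shift_shift n 1 (n + 1) rfl]
  exact fun X hX ↦ P.le_shift 1 _ hX

lemma isStableUnderShiftBy_rightOrthogonal [HasZeroMorphisms C] (n : ℤ)
    [P.IsStableUnderShiftBy (-n)] : P.rightOrthogonal.IsStableUnderShiftBy n where
  le_shift Y hY X f hX := by
    obtain ⟨g, rfl⟩ := ((shiftEquiv C n).symm.toAdjunction.homEquiv _ _).surjective f
    rw [hY g (P.le_shift (-n) _ hX), Adjunction.homEquiv_unit]
    exact (congrArg _ (Functor.map_zero _ _ _)).trans comp_zero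

end ShiftOfProperty

section TriangulatedClosure

variable (P : ObjectProperty T)

instance isTriangulatedClosed₂_shift [P.IsClosedUnderIsomorphisms] [P.IsTriangulatedClosed₂]
    (n : ℤ) : (P.shift n).IsTriangulatedClosed₂ :=
  .mk' fun Δ hΔ h₁ h₃ ↦
    P.ext_of_isTriangulatedClosed₂ _ (Triangle.shift_distinguished Δ hΔ n) h₁ h₃

lemma isTriangulatedClosed₁_of_isStableUnderShiftBy [P.IsClosedUnderIsomorphisms]
    [P.IsTriangulatedClosed₂] [P.IsStableUnderShiftBy (-1 : ℤ)] : P.IsTriangulatedClosed₁ :=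
  .mk' fun _ hΔ h₂ h₃ ↦
    P.ext_of_isTriangulatedClosed₂ _ (inv_rot_of_distTriang _ hΔ) (P.le_shift _ _ h₃) h₂

lemma isTriangulatedClosed₃_of_isStableUnderShiftBy [P.IsClosedUnderIsomorphisms]
    [P.IsTriangulatedClosed₂] [P.IsStableUnderShiftBy (1 : ℤ)] : P.IsTriangulatedClosed₃ :=
  .mk' fun _ hΔ h₁ h₂ ↦
    P.ext_of_isTriangulatedClosed₂ _ (rot_of_distTriang _ hΔ) h₂ (P.le_shift _ _ h₁)

variable {P} in
lemma isTriangulatedClosed₂_inf {Q : ObjectProperty T} [P.IsClosedUnderIsomorphisms]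
    [P.IsTriangulatedClosed₂] [Q.IsClosedUnderIsomorphisms] [Q.IsTriangulatedClosed₂] :
    (P ⊓ Q).IsTriangulatedClosed₂ :=
  .mk' fun Δ hΔ h₁ h₃ ↦
    ⟨P.ext_of_isTriangulatedClosed₂ Δ hΔ h₁.1 h₃.1, Q.ext_of_isTriangulatedClosed₂ Δ hΔ h₁.2 h₃.2⟩

lemma triHatAll_le {X S : ObjectProperty T} [S.IsClosedUnderIsomorphisms]
    [S.IsTriangulatedClosed₃] (hXS : X ≤ S) : TriHatAll X ≤ S := by
  rintro M ⟨n, hM⟩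
  induction n generalizing M with
  | zero => exact hXS M hM
  | succ n ih =>
    obtain ⟨K, E, f, g, h, hΔ, hE, hK⟩ := hM
    exact S.ext_of_isTriangulatedClosed₃ _ hΔ (ih K hK) (hXS E hE)

end TriangulatedClosure

section Thick

lemma isThickTriSub_iff {S : ObjectProperty T} :
    IsThickTriSub S ↔ S.IsTriangulated ∧ S.IsStableUnderRetracts := by
  refine ⟨fun hS ↦ ?_, fun ⟨_, _⟩ ↦ ?_⟩
  · have : S.IsClosedUnderIsomorphisms := ⟨hS.iso_closed⟩
    have : S.ContainsZero := ⟨0, isZero_zero T, hS.zero⟩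
    have : S.IsStableUnderShift ℤ := ⟨fun n ↦ ⟨fun M ↦ hS.shift_closed M n⟩⟩
    have : S.IsTriangulatedClosed₃ := .mk' fun _ hΔ ↦ hS.ext_closed _ _ _ hΔ
    have : S.IsTriangulatedClosed₂ := .of_isTriangulatedClosed₃
    exact ⟨{}, ⟨fun r ↦ hS.summand_closed r.i r.r r.retract⟩⟩
  · exact {
      zero := S.prop_zero
      iso_closed := S.prop_of_iso
      shift_closed := fun M n ↦ S.le_shift n M
      ext_closed := fun _ _ _ _ _ _ hΔ ↦ S.ext_of_isTriangulatedClosed₃ _ hΔ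
      summand_closed := fun i p hip ↦ S.prop_of_retract ⟨i, p, hip⟩ }

lemma isThickTriSub_triThickClosure (X : ObjectProperty T) :
    IsThickTriSub (triThickClosure X) where
  zero _ hS _ := hS.zero
  iso_closed e hA S hS hX := hS.iso_closed e (hA S hS hX)
  shift_closed M n hM S hS hX := hS.shift_closed M n (hM S hS hX)
  ext_closed _ _ _ f g h hΔ hA hB S hS hX := hS.ext_closed f g h hΔ (hA S hS hX) (hB S hS hX)
  summand_closed i p hip hM S hS hX := hS.summand_closed i p hip (hM S hS hX)

lemma le_triThickClosure (X : ObjectProperty T) : X ≤ triThickClosure X :=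
  fun M hM _ _ hX ↦ hX M hM

variable (P : ObjectProperty T) [P.ContainsZero] [P.IsStableUnderRetracts]
  [P.IsTriangulatedClosed₂] [P.IsStableUnderShiftBy (-1 : ℤ)]

lemma isThickTriSub_iSup_shift : IsThickTriSub (⨆ n : ℤ, P.shift n) := by
  have hle (n : ℤ) : P.shift n ≤ ⨆ n : ℤ, P.shift n := le_iSup P.shift n
  have retracts : (⨆ n : ℤ, P.shift n).IsStableUnderRetracts := ⟨fun {X Y} r hY ↦ by
    obtain ⟨n, hn⟩ := (ObjectProperty.prop_iSup_iff _ _).1 hY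
    exact hle n X ((P.shift n).prop_of_retract r hn)⟩
  have extensions : (⨆ n : ℤ, P.shift n).IsTriangulatedClosed₂ := .mk' fun Δ hΔ h₁ h₃ ↦ by
    obtain ⟨k, hk⟩ := (ObjectProperty.prop_iSup_iff _ _).1 h₁
    obtain ⟨l, hl⟩ := (ObjectProperty.prop_iSup_iff _ _).1 h₃
    exact hle (min k l) _ ((P.shift (min k l)).ext_of_isTriangulatedClosed₂ Δ hΔ
      (antitone_shift P (min_le_left k l) _ hk) (antitone_shift P (min_le_right k l) _ hl))
  have zero : (⨆ n : ℤ, P.shift n).ContainsZero :=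
    ⟨0, isZero_zero T, hle 0 _ (by rw [P.shift_zero]; exact P.prop_zero)⟩
  exact isThickTriSub_iff.2 ⟨{}, retracts⟩

lemma exists_nat_shift_of_triThickClosure {M : T} (hM : triThickClosure P M) :
    ∃ n : ℕ, P.shift (-n : ℤ) M := by
  have hP : P ≤ ⨆ n : ℤ, P.shift n := by
    conv_lhs => rw [← P.shift_zero ℤ]
    exact le_iSup P.shift (0 : ℤ)
  obtain ⟨k, hk⟩ := (ObjectProperty.prop_iSup_iff _ _).1 (hM _ (isThickTriSub_iSup_shift P) hP)
  exact ⟨(-k).toNat, antitone_shift P (by lia) _ hk⟩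

end Thick

namespace CoTStructureOn

variable {B U V : ObjectProperty T}

section Orthogonality

variable (hco : CoTStructureOn B U V)
include hco

lemma isStableUnderRetracts_left : U.IsStableUnderRetracts :=
  ⟨fun r ↦ hco.summandU r.i r.r r.retract⟩

lemma isStableUnderRetracts_right : V.IsStableUnderRetracts :=
  ⟨fun r ↦ hco.summandV r.i r.r r.retract⟩

lemma isStableUnderShiftBy_left : U.IsStableUnderShiftBy (-1 : ℤ) :=
  ⟨hco.shiftU⟩

lemma left_eq_inf_leftOrthogonal : U = B ⊓ (V.shift (-1 : ℤ)).leftOrthogonal := by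
  apply le_antisymm
  · refine fun M hM ↦ ⟨hco.UsubB M hM, fun Y f hY ↦ ?_⟩
    exact (Preadditive.IsIso.comp_right_eq_zero f (shiftNegShift Y (1 : ℤ)).inv).1
      (hco.hom_zero _ _ _ hM hY)
  · rintro M ⟨hBM, hM⟩
    obtain ⟨V₀, U₀, f, g, h, hΔ, hU, hV⟩ := hco.tri₁ M hBM
    have h_zero : h = 0 := hM h (hco.isoV (shiftShiftNeg V₀ (1 : ℤ)).symm hV)
    have : Epi g := Triangle.epi₂ _ hΔ h_zero
    have := isSplitEpi_of_epi g
    exact hco.summandU (section_ g) g (IsSplitEpi.id g) hU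

lemma right_eq_inf_rightOrthogonal : V = B ⊓ U.rightOrthogonal.shift (1 : ℤ) := by
  refine le_antisymm (fun M hM ↦ ⟨hco.VsubB M hM, fun X f hX ↦ hco.hom_zero X M f hX hM⟩)
    fun M ⟨hBM, hM⟩ ↦ ?_
  obtain ⟨V₀, U₀, f, g, h, hΔ, hU, hV⟩ := hco.tri₂ M hBM
  have h_zero : h = 0 := hM h hU
  have : Mono f := Triangle.mono₁ _ hΔ h_zero
  have := isSplitMono_of_mono f
  exact hco.summandV f (retraction f) (IsSplitMono.id f) hV

end Orthogonality

variable (hB : IsThickTriSub B) (hco : CoTStructureOn B U V)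
include hB hco

lemma containsZero_left : U.ContainsZero := by
  rw [hco.left_eq_inf_leftOrthogonal]
  exact ⟨0, isZero_zero T, hB.zero, fun _ f _ ↦ (isZero_zero T).eq_of_src f 0⟩

lemma containsZero_right : V.ContainsZero := by
  rw [hco.right_eq_inf_rightOrthogonal]
  exact ⟨0, isZero_zero T, hB.zero, fun _ f _ ↦
    ((shiftFunctor T (1 : ℤ)).map_isZero (isZero_zero T)).eq_of_tgt f 0⟩

lemma isTriangulatedClosed₂_left : U.IsTriangulatedClosed₂ := by
  obtain ⟨_, _⟩ := isThickTriSub_iff.1 hB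
  rw [hco.left_eq_inf_leftOrthogonal]
  exact isTriangulatedClosed₂_inf

lemma isTriangulatedClosed₂_right : V.IsTriangulatedClosed₂ := by
  obtain ⟨_, _⟩ := isThickTriSub_iff.1 hB
  rw [hco.right_eq_inf_rightOrthogonal]
  exact isTriangulatedClosed₂_inf

lemma isStableUnderShiftBy_right : V.IsStableUnderShiftBy (1 : ℤ) := by
  have := hco.isStableUnderShiftBy_left
  have := isStableUnderShiftBy_rightOrthogonal U 1
  rw [hco.right_eq_inf_rightOrthogonal]
  exact ⟨fun M ⟨hBM, hM⟩ ↦ ⟨hB.shift_closed M 1 hBM, U.rightOrthogonal.le_shift 1 _ hM⟩⟩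

lemma hom_shift_eq_zero {M N : T} (hM : U M) (hN : V N) {i : ℤ} (hi : 1 ≤ i) (f : M ⟶ N⟦i⟧) :
    f = 0 := by
  have := hco.isStableUnderRetracts_right
  have := hco.isStableUnderShiftBy_right hB
  rw [hco.left_eq_inf_leftOrthogonal] at hM
  suffices (V.shift (-1 : ℤ)).shift i N from hM.2 f this
  rw [V.shift_shift i (-1) (i - 1) rfl]
  exact monotone_shift V (sub_nonneg.2 hi) N (by rwa [V.shift_zero])

theorem triLeftFrobenius : TriLeftFrobenius U (U ⊓ V) := by
  have := hco.isStableUnderRetracts_left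
  have := hco.isStableUnderRetracts_right
  have := hco.isStableUnderShiftBy_left
  have := hco.containsZero_left hB
  have := hco.containsZero_right hB
  have := hco.isTriangulatedClosed₂_left hB
  have := isTriangulatedClosed₁_of_isStableUnderShiftBy U
  exact {
    subX := ⟨U.prop_zero, hco.isoU, hco.summandU⟩
    subW := ⟨⟨U.prop_zero, V.prop_zero⟩, fun e ↦ .imp (hco.isoU e) (hco.isoV e),
      fun i p hip ↦ .imp (hco.summandU i p hip) (hco.summandV i p hip)⟩
    extClosed := fun _ _ _ _ _ _ hΔ ↦ U.ext_of_isTriangulatedClosed₂ _ hΔ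
    coconeClosed := fun _ _ _ _ _ _ hΔ ↦ U.ext_of_isTriangulatedClosed₁ _ hΔ
    WsubX := fun _ hM ↦ hM.1
    cogen := fun M hM ↦ by
      obtain ⟨V₀, U₀, f, g, h, hΔ, hU, hV⟩ := hco.tri₂ M (hco.UsubB M hM)
      exact ⟨V₀, U₀, f, g, h, hΔ, ⟨U.ext_of_isTriangulatedClosed₂ _ hΔ hM hU, hV⟩, hU⟩
    perp := fun _ _ hM hN _ hi f ↦ hco.hom_shift_eq_zero hB hM hN.2 hi f }

lemma triHat_of_shift (n : ℕ) {M : T} (hV : V M) (hU : U.shift (-n : ℤ) M) :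
    TriHat (U ⊓ V) n M := by
  have := hco.isStableUnderRetracts_left
  have := hco.isStableUnderRetracts_right
  have := hco.isStableUnderShiftBy_left
  have := hco.isTriangulatedClosed₂_left hB
  have := hco.isTriangulatedClosed₂_right hB
  induction n generalizing M with
  | zero => exact ⟨by rwa [Nat.cast_zero, neg_zero, U.shift_zero] at hU, hV⟩
  | succ n ih =>
    obtain ⟨V₀, U₀, f, g, h, hΔ, hU₀, hV₀⟩ := hco.tri₁ M (hco.VsubB M hV)
    have hVU₀ : V U₀ := V.ext_of_isTriangulatedClosed₂ _ hΔ hV₀ hV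
    have hUM : U.shift (-n : ℤ) (M⟦(-1 : ℤ)⟧) := by
      rwa [← U.shift_shift (-1) (-n : ℤ) _ (by push_cast; ring)] at hU
    have hUU₀ : U.shift (-n : ℤ) U₀ :=
      antitone_shift U (show -(n : ℤ) ≤ 0 by lia) U₀ (by rwa [U.shift_zero])
    have hUV₀ : U.shift (-n : ℤ) V₀ :=
      (U.shift (-n : ℤ)).ext_of_isTriangulatedClosed₂ _ (inv_rot_of_distTriang _ hΔ) hUM hUU₀
    exact ⟨V₀, U₀, f, g, h, hΔ, ⟨hU₀, hVU₀⟩, ih hV₀ hUV₀⟩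

theorem triHatAll_inf_eq : TriHatAll (U ⊓ V) = V ⊓ triThickClosure U := by
  have := hco.isStableUnderRetracts_left
  have := hco.isStableUnderRetracts_right
  have := hco.isStableUnderShiftBy_left
  have := hco.isStableUnderShiftBy_right hB
  have := hco.containsZero_left hB
  have := hco.isTriangulatedClosed₂_left hB
  have := hco.isTriangulatedClosed₂_right hB
  have := isTriangulatedClosed₃_of_isStableUnderShiftBy V
  obtain ⟨_, _⟩ := isThickTriSub_iff.1 (isThickTriSub_triThickClosure U)
  refine le_antisymm (le_inf (triHatAll_le inf_le_right)
    (triHatAll_le (inf_le_left.trans (le_triThickClosure U)))) fun M ⟨hV, hM⟩ ↦ ?_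
  obtain ⟨n, hn⟩ := exists_nat_shift_of_triThickClosure U hM
  exact ⟨n, hco.triHat_of_shift hB n hV hn⟩

end CoTStructureOn

theorem statement18_general {B U V : ObjectProperty T} (hB : IsThickTriSub B)
    (hco : CoTStructureOn B U V) :
    TriLeftFrobenius U (U ⊓ V) ∧ TriHatAll (U ⊓ V) = V ⊓ triThickClosure U :=
  ⟨hco.triLeftFrobenius hB, hco.triHatAll_inf_eq hB⟩

/-- If `(U, V)` is a co-t-structure on `Thick(U)`, then `(U, U ∩ V)` is a
left Frobenius pair in `T` and `(U ∩ V)^ = V`. -/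
theorem statement18 {T : Type u} [Category.{v} T] [HasZeroObject T] [HasShift T ℤ]
    [Preadditive T] [∀ n : ℤ, (shiftFunctor T n).Additive] [Pretriangulated T]
    (U V : T → Prop) (hco : CoTStructureOn (triThickClosure U) U V) :
    TriLeftFrobenius U (fun M => U M ∧ V M) ∧
      (∀ M, TriHatAll (fun A => U A ∧ V A) M ↔ V M) := by
  have h := statement18_general (isThickTriSub_triThickClosure U) hco
  exact ⟨h.1, fun M ↦ (iff_of_eq (congrFun h.2 M)).trans (and_iff_left_of_imp (hco.VsubB M))⟩

end FrobeniusPaperTri
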